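/- arXiv:math/0302283 — 3 statements merged into one kernel-verified Lean document; each statement's English description precedes it below -/
import Mathlib

section
/- Let Z be a nonempty topological space. The points ⊥ and ⊤ are closed in Glob^top(Z), the set Glob^top(Z) ∖ {⊥, ⊤} is open, and the quotient map q restricts to a homeomorphism from Z × (0,1) onto the open subspace Glob^top(Z) ∖ {⊥, ⊤}. -/
/-- The smallest equivalence relation on `Z × [0,1]` identifying `(z,0)` with `(z',0)`
and `(z,1)` with `(z',1)` for all `z, z'`. -/
def globSetoid (Z : Type) [TopologicalSpace Z] : Setoid (Z × unitInterval) where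
  r a b := a = b ∨ (a.2 = 0 ∧ b.2 = 0) ∨ (a.2 = 1 ∧ b.2 = 1)
  iseqv := by
    constructor
    · exact fun a => Or.inl rfl
    · rintro a b (rfl | ⟨h1, h2⟩ | ⟨h1, h2⟩)
      · exact Or.inl rfl
      · exact Or.inr (Or.inl ⟨h2, h1⟩)
      · exact Or.inr (Or.inr ⟨h2, h1⟩)
    · rintro a b c (rfl | ⟨h1, h2⟩ | ⟨h1, h2⟩) (rfl | ⟨h3, h4⟩ | ⟨h3, h4⟩) <;>
        simp_all

/-- The globe `Glob^top(Z)`: the quotient of `Z × [0,1]` collapsing `Z × {0}` to a point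
and `Z × {1}` to a point. -/
def GlobTop (Z : Type) [TopologicalSpace Z] : Type := Quotient (globSetoid Z)

/-- The quotient map `q : Z × [0,1] → Glob^top(Z)`. -/
def globQ (Z : Type) [TopologicalSpace Z] : Z × unitInterval → GlobTop Z :=
  Quotient.mk (globSetoid Z)

/-- `Glob^top(Z)` carries the quotient topology. -/
instance (Z : Type) [TopologicalSpace Z] : TopologicalSpace (GlobTop Z) :=
  TopologicalSpace.coinduced (globQ Z) inferInstance

/-- The bottom point `⊥` of `Glob^top(Z)`, the common class of the points `(z,0)`. -/
noncomputable def globBot (Z : Type) [TopologicalSpace Z] [Nonempty Z] : GlobTop Z :=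
  globQ Z (Classical.arbitrary Z, 0)

/-- The top point `⊤` of `Glob^top(Z)`, the common class of the points `(z,1)`. -/
noncomputable def globTop (Z : Type) [TopologicalSpace Z] [Nonempty Z] : GlobTop Z :=
  globQ Z (Classical.arbitrary Z, 1)

theorem globQ_eq_iff (Z : Type) [TopologicalSpace Z] (a b : Z × unitInterval) :
    globQ Z a = globQ Z b ↔ (a = b ∨ (a.2 = 0 ∧ b.2 = 0) ∨ (a.2 = 1 ∧ b.2 = 1)) :=
  Quotient.eq (r := globSetoid Z)

theorem globQ_isQuotientMap (Z : Type) [TopologicalSpace Z] :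
    Topology.IsQuotientMap (globQ Z) :=
  ⟨⟨rfl⟩, Quotient.mk_surjective⟩

theorem globQ_eq_bot (Z : Type) [TopologicalSpace Z] [Nonempty Z] (a : Z × unitInterval) :
    globQ Z a = globBot Z ↔ a.2 = 0 := by
  unfold globBot
  rw [globQ_eq_iff]
  constructor
  · rintro (rfl | h | h)
    · rfl
    · exact h.1
    · exact absurd h.2 zero_ne_one
  · intro h
    exact Or.inr (Or.inl ⟨h, rfl⟩)

theorem globQ_eq_top (Z : Type) [TopologicalSpace Z] [Nonempty Z] (a : Z × unitInterval) :
    globQ Z a = globTop Z ↔ a.2 = 1 := by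
  unfold globTop
  rw [globQ_eq_iff]
  constructor
  · rintro (rfl | h | h)
    · rfl
    · exact absurd h.2 one_ne_zero
    · exact h.1
  · intro h
    exact Or.inr (Or.inr ⟨h, rfl⟩)

/-- for `Z` nonempty, `⊥` and `⊤` are closed points of `Glob^top(Z)`,
the complement `Glob^top(Z) ∖ {⊥, ⊤}` is open, and `q` restricts to a homeomorphism
(an open embedding) from `Z × (0,1)` onto this open subspace. -/
theorem globTop_minus_endpoints (Z : Type) [TopologicalSpace Z] [Nonempty Z] :
    IsClosed ({globBot Z} : Set (GlobTop Z)) ∧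
    IsClosed ({globTop Z} : Set (GlobTop Z)) ∧
    IsOpen {x : GlobTop Z | x ≠ globBot Z ∧ x ≠ globTop Z} ∧
    Topology.IsOpenEmbedding
      (fun p : Z × (Set.Ioo (0 : unitInterval) 1) => globQ Z (p.1, p.2.1)) ∧
    Set.range (fun p : Z × (Set.Ioo (0 : unitInterval) 1) => globQ Z (p.1, p.2.1)) =
      {x : GlobTop Z | x ≠ globBot Z ∧ x ≠ globTop Z} := by
  have hq := globQ_isQuotientMap Z
  have hb : IsClosed ({globBot Z} : Set (GlobTop Z)) := by
    rw [← hq.isClosed_preimage]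
    have : globQ Z ⁻¹' {globBot Z} = Prod.snd ⁻¹' {0} := by
      ext a
      exact globQ_eq_bot Z a
    rw [this]
    exact isClosed_singleton.preimage continuous_snd
  have ht : IsClosed ({globTop Z} : Set (GlobTop Z)) := by
    rw [← hq.isClosed_preimage]
    have : globQ Z ⁻¹' {globTop Z} = Prod.snd ⁻¹' {1} := by
      ext a
      exact globQ_eq_top Z a
    rw [this]
    exact isClosed_singleton.preimage continuous_snd
  refine ⟨hb, ht, hb.isOpen_compl.inter ht.isOpen_compl, ?_, ?_⟩
  · have hg : Topology.IsOpenEmbedding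
        (Prod.map id Subtype.val : Z × (Set.Ioo (0 : unitInterval) 1) → Z × unitInterval) :=
      Topology.IsOpenEmbedding.id.prodMap isOpen_Ioo.isOpenEmbedding_subtypeVal
    apply Topology.IsOpenEmbedding.of_continuous_injective_isOpenMap
    · exact hq.continuous.comp hg.continuous
    · rintro ⟨z, t, ht0, ht1⟩ ⟨w, s, hs0, hs1⟩ h
      rcases (globQ_eq_iff Z _ _).1 h with h | h | h
      · exact hg.injective h
      · exact absurd h.1 ht0.ne'
      · exact absurd h.1 ht1.ne
    · intro U hU
      rw [← hq.isOpen_preimage]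
      convert hg.isOpenMap U hU using 1
      ext a
      constructor
      · rintro ⟨⟨z, t, ht0, ht1⟩, hu, h⟩
        refine ⟨⟨z, t, ht0, ht1⟩, hu, ?_⟩
        rcases (globQ_eq_iff Z _ _).1 h with h | h | h
        · exact h
        · exact absurd h.1 ht0.ne'
        · exact absurd h.1 ht1.ne
      · rintro ⟨p, hu, rfl⟩
        exact ⟨p, hu, rfl⟩
  · ext x
    obtain ⟨⟨z, t⟩, rfl⟩ := hq.surjective x
    simp only [Set.mem_setOf_eq, ne_eq, globQ_eq_bot, globQ_eq_top]
    constructor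
    · rintro ⟨⟨w, s, hs0, hs1⟩, h⟩
      rcases (globQ_eq_iff Z _ _).1 h with h | h | h
      · obtain ⟨rfl, rfl⟩ := Prod.mk.inj h
        exact ⟨hs0.ne', hs1.ne⟩
      · exact absurd h.1 hs0.ne'
      · exact absurd h.1 hs1.ne
    · rintro ⟨h0, h1⟩
      exact ⟨(z, ⟨t, lt_of_le_of_ne t.2.1 (Ne.symm h0), lt_of_le_of_ne t.2.2 h1⟩), rfl⟩
end

section
/- Through every point of Glob^top(Z) other than ⊥ and ⊤ there passes exactly one non-constant execution path up to reparametrization. Precisely: let Z be a nonempty topological space and let γ : [0,1] → Glob^top(Z) be a continuous map with γ(0) = ⊥, γ(1) = ⊤, which is monotone for the partial order of Glob^top(Z) (u ≤ v implies γ(u) ≤ γ(v)). Then there exist a unique z ∈ Z and a unique continuous nondecreasing map φ : [0,1] → [0,1] with φ(0) = 0 and φ(1) = 1 such that γ(u) = q(z, φ(u)) for all u ∈ [0,1]. -/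
/-- The relation on representatives defining the partial order of `Glob^top(Z)`:
`(z,t) ≤ (z',t')` iff `t = 0`, or `t' = 1`, or (`z = z'` and `t ≤ t'`). -/
def globLE' (Z : Type) [TopologicalSpace Z] (a b : Z × unitInterval) : Prop :=
  a.2 = 0 ∨ b.2 = 1 ∨ (a.1 = b.1 ∧ a.2 ≤ b.2)

/-- The partial order of `Glob^top(Z)`, defined via representatives. -/
def globLE (Z : Type) [TopologicalSpace Z] (x y : GlobTop Z) : Prop :=
  ∃ a b : Z × unitInterval, globQ Z a = x ∧ globQ Z b = y ∧ globLE' Z a b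

/-- Height function. -/
def globHt (Z : Type) [TopologicalSpace Z] : GlobTop Z → unitInterval :=
  Quotient.lift (fun a : Z × unitInterval => a.2) (by
    rintro a b (rfl | ⟨h1, h2⟩ | ⟨h1, h2⟩)
    · rfl
    · exact h1.trans h2.symm
    · exact h1.trans h2.symm)

theorem globHt_globQ (Z : Type) [TopologicalSpace Z] (a : Z × unitInterval) :
    globHt Z (globQ Z a) = a.2 := rfl

theorem continuous_globHt (Z : Type) [TopologicalSpace Z] : Continuous (globHt Z) :=
  continuous_coinduced_dom.2 continuous_snd

theorem globHt_mono (Z : Type) [TopologicalSpace Z] {x y : GlobTop Z} (h : globLE Z x y) :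
    globHt Z x ≤ globHt Z y := by
  obtain ⟨a, b, rfl, rfl, h | h | h⟩ := h
  · rw [globHt_globQ, h]; exact unitInterval.nonneg'
  · rw [globHt_globQ Z b, h]; exact unitInterval.le_one'
  · exact h.2

theorem fst_eq_of_globLE (Z : Type) [TopologicalSpace Z] {a b : Z × unitInterval}
    (h : globLE Z (globQ Z a) (globQ Z b)) (ha0 : a.2 ≠ 0) (ha1 : a.2 ≠ 1)
    (hb0 : b.2 ≠ 0) (hb1 : b.2 ≠ 1) : a.1 = b.1 := by
  obtain ⟨a', b', h1, h2, h⟩ := h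
  rw [globQ_eq_iff] at h1 h2
  have e1 : a' = a := by tauto
  have e2 : b' = b := by tauto
  subst e1 e2
  rcases h with h | h | h
  · exact absurd h ha0
  · exact absurd h hb1
  · exact h.1

/-- through every point of `Glob^top(Z)` other than `⊥` and `⊤` passes exactly
one non-constant execution path up to reparametrization: every continuous monotone
`γ : [0,1] → Glob^top(Z)` with `γ(0) = ⊥` and `γ(1) = ⊤` is of the form `γ(u) = q(z, φ(u))`
for a unique `z ∈ Z` and a unique continuous nondecreasing `φ : [0,1] → [0,1]` with
`φ(0) = 0` and `φ(1) = 1`. -/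
theorem execution_path_unique (Z : Type) [TopologicalSpace Z] [Nonempty Z]
    (γ : unitInterval → GlobTop Z) (hγ : Continuous γ)
    (h0 : γ 0 = globBot Z) (h1 : γ 1 = globTop Z)
    (hmono : ∀ u v : unitInterval, u ≤ v → globLE Z (γ u) (γ v)) :
    ∃! p : Z × (unitInterval → unitInterval),
      Continuous p.2 ∧ Monotone p.2 ∧ p.2 0 = 0 ∧ p.2 1 = 1 ∧
        ∀ u : unitInterval, γ u = globQ Z (p.1, p.2 u) := by
  have hc : Continuous (fun u => globHt Z (γ u)) := (continuous_globHt Z).comp hγ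
  have hz0 : globHt Z (γ 0) = 0 := by rw [h0]; rfl
  have hz1 : globHt Z (γ 1) = 1 := by rw [h1]; rfl
  obtain ⟨m, hm0, hm1⟩ : ∃ m : unitInterval, m ≠ 0 ∧ m ≠ 1 :=
    ⟨⟨1 / 2, by norm_num, by norm_num⟩, by
      intro h; have := congrArg Subtype.val h; norm_num at this, by
      intro h; have := congrArg Subtype.val h; norm_num at this⟩
  obtain ⟨w, hw⟩ : ∃ w, globHt Z (γ w) = m := by
    apply mem_range_of_exists_le_of_exists_ge hc
    · exact ⟨0, by rw [hz0]; exact unitInterval.nonneg'⟩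
    · exact ⟨1, by rw [hz1]; exact unitInterval.le_one'⟩
  have hsurj : ∀ x : GlobTop Z, ∃ a, globQ Z a = x := fun x => Quotient.exists_rep x
  obtain ⟨⟨z, t⟩, hzt⟩ := hsurj (γ w)
  have ht : t = m := by rw [← hw, ← hzt]; rfl
  subst ht
  refine ⟨(z, fun u => globHt Z (γ u)),
    ⟨hc, fun u v huv => globHt_mono Z (hmono u v huv), hz0, hz1, ?_⟩, ?_⟩
  · intro u
    obtain ⟨⟨z', s⟩, hs⟩ := hsurj (γ u)
    show γ u = globQ Z (z, globHt Z (γ u))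
    rw [← hs, globHt_globQ, globQ_eq_iff]
    by_cases hs0 : s = 0
    · exact Or.inr (Or.inl ⟨hs0, hs0⟩)
    by_cases hs1 : s = 1
    · exact Or.inr (Or.inr ⟨hs1, hs1⟩)
    left
    have : z' = z := by
      rcases le_total u w with h | h
      · have h := hmono _ _ h
        rw [← hs, ← hzt] at h
        exact fst_eq_of_globLE Z h hs0 hs1 hm0 hm1
      · have h := hmono _ _ h
        rw [← hs, ← hzt] at h
        exact (fst_eq_of_globLE Z h hm0 hm1 hs0 hs1).symm
    rw [this]
  · rintro ⟨z', φ⟩ ⟨-, -, -, -, hφ⟩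
    have hφ' : φ = fun u => globHt Z (γ u) := by
      funext u
      rw [hφ u]; rfl
    have h := hφ w
    rw [← hzt, globQ_eq_iff] at h
    have : z' = z := by
      rcases h with h | h | h
      · exact (congrArg Prod.fst h).symm
      · exact absurd h.1 hm0
      · exact absurd h.1 hm1
    rw [this, hφ']
end

section
/- Let Z be a topological space and A ⊆ Z a nonempty closed subspace. Then the continuous map Glob^top(A) → Glob^top(Z) induced by the inclusion A ↪ Z is a closed topological embedding. -/
/-- The map `Glob^top(A) → Glob^top(Z)` induced by the inclusion of a subspace `A ⊆ Z`:
it sends the class of `(a,t)` to the class of `(a,t)`. -/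
def globIncl (Z : Type) [TopologicalSpace Z] (A : Set Z) : GlobTop ↥A → GlobTop Z :=
  Quotient.lift (fun p : ↥A × unitInterval => globQ Z ((p.1 : Z), p.2))
    (by
      rintro ⟨a, t⟩ ⟨b, u⟩ (h | ⟨h1, h2⟩ | ⟨h1, h2⟩)
      · rw [h]
      · exact Quotient.sound (Or.inr (Or.inl ⟨h1, h2⟩))
      · exact Quotient.sound (Or.inr (Or.inr ⟨h1, h2⟩)))

/-- for a nonempty closed subspace `A ⊆ Z`, the induced continuous map
`Glob^top(A) → Glob^top(Z)` is a closed topological embedding. -/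
theorem globIncl_isClosedEmbedding (Z : Type) [TopologicalSpace Z] (A : Set Z)
    (hne : A.Nonempty) (hA : IsClosed A) :
    Topology.IsClosedEmbedding (globIncl Z A) := by
  have hq : ∀ (X : Type) [TopologicalSpace X], Topology.IsQuotientMap (globQ X) := by
    intro X _
    exact ⟨⟨rfl⟩, Quotient.mk_surjective⟩
  have hj : Topology.IsClosedEmbedding
      (Prod.map Subtype.val id : ↥A × unitInterval → Z × unitInterval) :=
    hA.isClosedEmbedding_subtypeVal.prodMap Topology.IsClosedEmbedding.id
  have hrel : ∀ (X : Type) [TopologicalSpace X] (a b : X × unitInterval),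
      globQ X a = globQ X b ↔ (a = b ∨ (a.2 = 0 ∧ b.2 = 0) ∨ (a.2 = 1 ∧ b.2 = 1)) := by
    intro X _ a b
    exact Quotient.eq (r := globSetoid X)
  have hi : ∀ p : ↥A × unitInterval, globIncl Z A (globQ A p) = globQ Z ((p.1 : Z), p.2) :=
    fun _ => rfl
  refine Topology.IsClosedEmbedding.of_continuous_injective_isClosedMap ?_ ?_ ?_
  · rw [(hq A).continuous_iff]
    exact (hq Z).continuous.comp hj.continuous
  · intro x y hxy
    obtain ⟨⟨a, t⟩, rfl⟩ := (hq A).surjective x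
    obtain ⟨⟨b, u⟩, rfl⟩ := (hq A).surjective y
    rw [hi, hi, hrel] at hxy
    rw [hrel]
    rcases hxy with h | h
    · exact Or.inl (hj.injective h)
    · exact Or.inr h
  · intro C hC
    obtain ⟨a₀, ha₀⟩ := hne
    rw [← (hq Z).isClosed_preimage]
    have key : globQ Z ⁻¹' (globIncl Z A '' C) =
        (Prod.map Subtype.val id '' (globQ A ⁻¹' C)) ∪
        ({p | p.2 = 0 ∧ globQ A (⟨a₀, ha₀⟩, 0) ∈ C} ∪
          {p | p.2 = 1 ∧ globQ A (⟨a₀, ha₀⟩, 1) ∈ C}) := by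
      ext ⟨z, t⟩
      constructor
      · rintro ⟨x, hx, hxz⟩
        obtain ⟨⟨b, u⟩, rfl⟩ := (hq A).surjective x
        rw [hi, hrel] at hxz
        rcases hxz with h | ⟨h1, h2⟩ | ⟨h1, h2⟩
        · exact Or.inl ⟨(b, u), hx, h⟩
        · refine Or.inr (Or.inl ⟨h2, ?_⟩)
          rwa [(hrel A _ (b, u)).2 (Or.inr (Or.inl ⟨rfl, h1⟩))]
        · refine Or.inr (Or.inr ⟨h2, ?_⟩)
          rwa [(hrel A _ (b, u)).2 (Or.inr (Or.inr ⟨rfl, h1⟩))]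
      · rintro (⟨⟨b, u⟩, hx, h⟩ | ⟨h, hx⟩ | ⟨h, hx⟩)
        · exact ⟨_, hx, by rw [hi, ← h]; rfl⟩
        · exact ⟨_, hx, by rw [hi, hrel]; exact Or.inr (Or.inl ⟨rfl, h⟩)⟩
        · exact ⟨_, hx, by rw [hi, hrel]; exact Or.inr (Or.inr ⟨rfl, h⟩)⟩
    rw [key]
    refine (hj.isClosedMap _ (hC.preimage (hq A).continuous)).union (IsClosed.union ?_ ?_)
    · exact (isClosed_eq continuous_snd continuous_const).inter isClosed_const
    · exact (isClosed_eq continuous_snd continuous_const).inter isClosed_const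
end
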